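/- arXiv:2404.12219 — 3 statements merged into one kernel-verified Lean document; each statement's English description precedes it below -/
import Mathlib

section
/- Let H be a real Hilbert space, X a set, Φ : X → H a feature map, and P the orthogonal projection of H onto a finite-dimensional subspace V ⊆ H, giving the Nyström-approximated kernel C̃(x,y) = ⟨PΦ(x), PΦ(y)⟩. Let π̃ be the discrete probability measure given by points y_1,…,y_N ∈ X with nonnegative weights u_1,…,u_N summing to 1, and let the quadrature rule π_KQ be given by points x_1,…,x_n ∈ X with nonnegative weights w_1,…,w_n summing to 1. Assume (i) exactness on all test functions induced by V: Σ_{i=1}^n w_i P(Φ(x_i)) = Σ_{j=1}^N u_j P(Φ(y_j)); and (ii) Σ_{i=1}^n w_i ‖Φ(x_i) − PΦ(x_i)‖ ≤ Σ_{j=1}^N u_j ‖Φ(y_j) − PΦ(y_j)‖. Then for every μ ∈ H (the mean embedding of a target measure π), ‖Σ_{i=1}^n w_i Φ(x_i) − μ‖ ≤ ‖Σ_{i=1}^n w_i Φ(x_i) − Σ_{j=1}^N u_j Φ(y_j)‖ + ‖Σ_{j=1}^N u_j Φ(y_j) − μ‖ ≤ 2 Σ_{j=1}^N u_j ‖Φ(y_j)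 − PΦ(y_j)‖ + ‖Σ_{j=1}^N u_j Φ(y_j) − μ‖. (Here ‖Φ(y) − PΦ(y)‖ = √((C − C̃)(y,y)), so the first term is twice the π̃-integral of √(C − C̃), the Nyström approximation error, and the second term is the MMD between the empirical measure π̃ and the target, so the worst-case quadrature error of π_KQ against the target is bounded by the Nyström error plus the empirical-measure error.) -/
open scoped RealInnerProductSpace BigOperators

/-- The norm of a nonnegatively weighted sum is at most the weighted sum of the norms. -/
theorem norm_sum_smul_le_sum_mul_norm {E ι : Type*} [SeminormedAddCommGroup E] [NormedSpace ℝ E]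
    (s : Finset ι) {a : ι → ℝ} (ha : ∀ i ∈ s, 0 ≤ a i) (f : ι → E) :
    ‖∑ i ∈ s, a i • f i‖ ≤ ∑ i ∈ s, a i * ‖f i‖ :=
  norm_sum_le_of_le s fun i hi => by rw [norm_smul, Real.norm_of_nonneg (ha i hi)]

/-- Nyström + empirical-measure bound on the worst-case quadrature error.
`Φ : X → H` is a feature map, `V` a finite-dimensional subspace of `H` with orthogonal
projection `P`, the quadrature rule `π_KQ = (w, x)` and the empirical measure `π̃ = (u, y)`
are discrete probability measures.  If the rule is exact on the test functions induced by `V`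
and does not increase the integral of the Nyström residual `‖Φ(·) − PΦ(·)‖`, then for any
target mean embedding `μ ∈ H` the quadrature error is bounded by twice the Nyström
approximation error plus the empirical-measure MMD. -/
theorem stmt_0
    {H : Type*} [NormedAddCommGroup H] [InnerProductSpace ℝ H]
    {X : Type*} (Φ : X → H)
    (V : Submodule ℝ H) [FiniteDimensional ℝ V]
    {n N : ℕ} (x : Fin n → X) (w : Fin n → ℝ) (y : Fin N → X) (u : Fin N → ℝ)
    (hw : ∀ i, 0 ≤ w i) (hw1 : ∑ i, w i = 1)
    (hu : ∀ j, 0 ≤ u j) (hu1 : ∑ j, u j = 1)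
    (hexact : ∑ i, w i • (Submodule.orthogonalProjectionOnto V (Φ (x i)) : H)
      = ∑ j, u j • (Submodule.orthogonalProjectionOnto V (Φ (y j)) : H))
    (hres : ∑ i, w i * ‖Φ (x i) - (Submodule.orthogonalProjectionOnto V (Φ (x i)) : H)‖
      ≤ ∑ j, u j * ‖Φ (y j) - (Submodule.orthogonalProjectionOnto V (Φ (y j)) : H)‖) :
    ∀ μ : H,
      ‖(∑ i, w i • Φ (x i)) - μ‖
        ≤ ‖(∑ i, w i • Φ (x i)) - ∑ j, u j • Φ (y j)‖ + ‖(∑ j, u j • Φ (y j)) - μ‖ ∧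
      ‖(∑ i, w i • Φ (x i)) - ∑ j, u j • Φ (y j)‖ + ‖(∑ j, u j • Φ (y j)) - μ‖
        ≤ 2 * (∑ j, u j * ‖Φ (y j) - (Submodule.orthogonalProjectionOnto V (Φ (y j)) : H)‖)
          + ‖(∑ j, u j • Φ (y j)) - μ‖ := by
  intro μ
  refine ⟨norm_sub_le_norm_sub_add_norm_sub _ _ _, ?_⟩
  have hdiff : (∑ i, w i • Φ (x i)) - ∑ j, u j • Φ (y j)
      = ∑ i, w i • (Φ (x i) - (Submodule.orthogonalProjectionOnto V (Φ (x i)) : H))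
        - ∑ j, u j • (Φ (y j) - (Submodule.orthogonalProjectionOnto V (Φ (y j)) : H)) := by
    simp only [smul_sub, Finset.sum_sub_distrib, hexact]
    abel
  have hx := norm_sum_smul_le_sum_mul_norm Finset.univ (fun i _ => hw i)
    fun i => Φ (x i) - (Submodule.orthogonalProjectionOnto V (Φ (x i)) : H)
  have hy := norm_sum_smul_le_sum_mul_norm Finset.univ (fun j _ => hu j)
    fun j => Φ (y j) - (Submodule.orthogonalProjectionOnto V (Φ (y j)) : H)
  gcongr
  rw [hdiff]
  refine (norm_sub_le _ _).trans ?_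
  linarith
end

section
/- Let H be a real Hilbert space, X a set, Φ : X → H a feature map with kernel C(x,y) = ⟨Φ(x), Φ(y)⟩, and P the orthogonal projection of H onto a finite-dimensional subspace V ⊆ H. Let x_1,…,x_N ∈ X, let w^N and w* be nonnegative weight vectors in ℝ^N each summing to 1, and let q_1,…,q_N ∈ [0,1], with Z_1,…,Z_N independent Bernoulli random variables, P(Z_i = 1) = q_i. Set K_max := max_i ‖Φ(x_i)‖, ε_nys := max_i ‖Φ(x_i) − PΦ(x_i)‖, and ε_vio := 1 − Σ_i w^N_i q_i. Assume (i) Σ_i w*_i q_i ≥ Σ_i w^N_i q_i, and (ii) ‖Σ_i (w*_i − w^N_i) PΦ(x_i)‖ ≤ ε_LP for some ε_LP ≥ 0. Then for every g ∈ H, the RKHS function f(x) = ⟨g, Φ(x)⟩ satisfies E[ | Σ_{i=1}^N Z_i w*_i f(x_i) − Σ_{i=1}^N w^N_i f(x_i) | ] ≤ (ε_vio · K_max + 2 ε_nys + ε_LP) · ‖g‖. -/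
open MeasureTheory ProbabilityTheory
open scoped RealInnerProductSpace

/-- A `{0, 1}`-valued random variable that equals `1` with probability `q` has mean `q`. -/
lemma integral_eq_of_zero_or_one {Ω : Type*} [MeasurableSpace Ω] {μ : Measure Ω} {Z : Ω → ℝ}
    {q : ℝ} (hZ : Measurable Z) (hZ01 : ∀ ω, Z ω = 0 ∨ Z ω = 1) (hq : 0 ≤ q)
    (hZq : μ {ω | Z ω = 1} = ENNReal.ofReal q) : ∫ ω, Z ω ∂μ = q := by
  have hind : Z = {ω | Z ω = 1}.indicator 1 := by
    funext ω
    rcases hZ01 ω with h | h <;> simp [Set.indicator, h]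
  have hset : MeasurableSet {ω | Z ω = 1} := hZ (measurableSet_singleton 1)
  rw [hind, integral_indicator_one hset, measureReal_def, hZq, ENNReal.toReal_ofReal hq]

/-- The embedding difference of two probability weight vectors exceeds the difference of the
approximate embeddings by at most twice the approximation error. -/
lemma norm_sum_sub_smul_le {ι H : Type*} [Fintype ι] [SeminormedAddCommGroup H] [NormedSpace ℝ H]
    {v w : ι → ℝ} (hv : ∀ i, 0 ≤ v i) (hv1 : ∑ i, v i = 1) (hw : ∀ i, 0 ≤ w i)
    (hw1 : ∑ i, w i = 1) {a b : ι → H} {ε : ℝ} (hab : ∀ i, ‖a i - b i‖ ≤ ε) :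
    ‖∑ i, (v i - w i) • a i‖ ≤ 2 * ε + ‖∑ i, (v i - w i) • b i‖ := by
  have hsplit : ∑ i, (v i - w i) • a i
      = ∑ i, (v i - w i) • (a i - b i) + ∑ i, (v i - w i) • b i := by
    simp [← Finset.sum_add_distrib, ← smul_add]
  have hres : ‖∑ i, (v i - w i) • (a i - b i)‖ ≤ 2 * ε := calc
    ‖∑ i, (v i - w i) • (a i - b i)‖ ≤ ∑ i, (v i + w i) * ε := by
      refine norm_sum_le_of_le _ fun i _ => ?_
      rw [norm_smul]
      refine mul_le_mul ?_ (hab i) (norm_nonneg _) (add_nonneg (hv i) (hw i))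
      rw [Real.norm_eq_abs, abs_le]
      constructor <;> linarith [hv i, hw i]
    _ = 2 * ε := by
      rw [← Finset.sum_mul, Finset.sum_add_distrib, hv1, hw1]
      norm_num
  rw [hsplit]
  exact (norm_add_le _ _).trans (by gcongr)

/-- Thinning a weighted sum of values bounded by `B` costs at most `B` times the lost mass. -/
lemma abs_sum_thinned_sub_le {ι : Type*} [Fintype ι] {z v w f : ι → ℝ} {B : ℝ}
    (hz : ∀ i, z i ≤ 1) (hv : ∀ i, 0 ≤ v i) (hf : ∀ i, |f i| ≤ B) :
    |(∑ i, z i * v i * f i) - ∑ i, w i * f i|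
      ≤ (∑ i, (1 - z i) * v i) * B + |∑ i, (v i - w i) * f i| := by
  have hsplit : (∑ i, z i * v i * f i) - ∑ i, w i * f i
      = -(∑ i, (1 - z i) * v i * f i) + ∑ i, (v i - w i) * f i := by
    rw [← Finset.sum_neg_distrib, ← Finset.sum_add_distrib, ← Finset.sum_sub_distrib]
    exact Finset.sum_congr rfl fun i _ => by ring
  rw [hsplit]
  refine (abs_add_le _ _).trans ?_
  rw [abs_neg, Finset.sum_mul]
  gcongr
  refine (Finset.abs_sum_le_sum_abs _ _).trans (Finset.sum_le_sum fun i _ => ?_)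
  have h : 0 ≤ (1 - z i) * v i := mul_nonneg (sub_nonneg.2 (hz i)) (hv i)
  rw [abs_mul, abs_of_nonneg h]
  exact mul_le_mul_of_nonneg_left (hf i) h

/-- Guarantee of the constrained linear-programming quadrature under random
thinning.  `Φ` is a feature map, `P` the orthogonal projection onto a finite-dimensional
subspace `V` (Nyström approximation), `Z i` independent Bernoulli feasibility variables with
probabilities `q i`, `Kmax = max_i ‖Φ(x_i)‖`, `εnys = max_i ‖Φ(x_i) − PΦ(x_i)‖`,
`εvio = 1 − ∑ i, wN i * q i`.  If the LP solution `w*` has at least the expected feasibility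
of `wN` and its projected embedding difference from `wN` is at most `εLP`, then for every
`g ∈ H` the RKHS function `f = ⟪g, Φ(·)⟫` satisfies
`E[ |∑ i, Z_i w*_i f(x_i) − ∑ i, wN_i f(x_i)| ] ≤ (εvio Kmax + 2 εnys + εLP) ‖g‖`. -/
theorem stmt_2
    {H : Type*} [NormedAddCommGroup H] [InnerProductSpace ℝ H]
    {X : Type*} (Φ : X → H)
    (V : Submodule ℝ H) [FiniteDimensional ℝ V]
    {N : ℕ} (x : Fin N → X)
    (wN wstar : Fin N → ℝ)
    (hwN : ∀ i, 0 ≤ wN i) (hwN1 : ∑ i, wN i = 1)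
    (hwstar : ∀ i, 0 ≤ wstar i) (hwstar1 : ∑ i, wstar i = 1)
    (q : Fin N → ℝ) (hq : ∀ i, q i ∈ Set.Icc (0 : ℝ) 1)
    {Ω : Type*} [MeasurableSpace Ω] (μ : Measure Ω) [IsProbabilityMeasure μ]
    (Z : Fin N → Ω → ℝ)
    (hZmeas : ∀ i, Measurable (Z i))
    (hZ01 : ∀ i ω, Z i ω = 0 ∨ Z i ω = 1)
    (hZq : ∀ i, μ {ω | Z i ω = 1} = ENNReal.ofReal (q i))
    (hZindep : iIndepFun Z μ)
    (Kmax εnys εvio εLP : ℝ) (hεLP : 0 ≤ εLP)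
    (hKmax : IsGreatest (Set.range fun i => ‖Φ (x i)‖) Kmax)
    (hεnys : IsGreatest
      (Set.range fun i => ‖Φ (x i) - (Submodule.orthogonalProjectionOnto V (Φ (x i)) : H)‖) εnys)
    (hεvio : εvio = 1 - ∑ i, wN i * q i)
    (hfeas : ∑ i, wN i * q i ≤ ∑ i, wstar i * q i)
    (hLP : ‖∑ i, (wstar i - wN i) • (Submodule.orthogonalProjectionOnto V (Φ (x i)) : H)‖ ≤ εLP) :
    ∀ g : H,
      (∫ ω, |(∑ i, Z i ω * wstar i * ⟪g, Φ (x i)⟫) - ∑ i, wN i * ⟪g, Φ (x i)⟫| ∂μ)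
        ≤ (εvio * Kmax + 2 * εnys + εLP) * ‖g‖ := by
  intro g
  have hK : ∀ i, ‖Φ (x i)‖ ≤ Kmax := fun i => hKmax.2 ⟨i, rfl⟩
  have hK0 : 0 ≤ Kmax := by
    obtain ⟨i, hi⟩ := hKmax.1
    exact hi ▸ norm_nonneg _
  have hf : ∀ i, |⟪g, Φ (x i)⟫| ≤ Kmax * ‖g‖ := fun i =>
    (abs_real_inner_le_norm _ _).trans (by rw [mul_comm]; gcongr; exact hK i)
  have hquad : |∑ i, (wstar i - wN i) * ⟪g, Φ (x i)⟫| ≤ (2 * εnys + εLP) * ‖g‖ := by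
    have hinner : ∑ i, (wstar i - wN i) * ⟪g, Φ (x i)⟫
        = ⟪g, ∑ i, (wstar i - wN i) • Φ (x i)⟫ := by
      simp [inner_sum, real_inner_smul_right]
    rw [hinner, mul_comm]
    refine (abs_real_inner_le_norm _ _).trans ?_
    gcongr
    exact (norm_sum_sub_smul_le hwstar hwstar1 hwN hwN1 fun i => hεnys.2 ⟨i, rfl⟩).trans
      (by gcongr)
  have hZ1 : ∀ i ω, Z i ω ≤ 1 := fun i ω => by rcases hZ01 i ω with h | h <;> simp [h]
  have hZint : ∀ i, Integrable (Z i) μ := fun i =>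
    Integrable.of_bound (hZmeas i).aestronglyMeasurable 1
      (ae_of_all _ fun ω => by rcases hZ01 i ω with h | h <;> simp [h])
  have hterm : ∀ i, Integrable (fun ω => (1 - Z i ω) * wstar i) μ := fun i =>
    ((integrable_const 1).sub (hZint i)).mul_const _
  have hmass : Integrable (fun ω => ∑ i, (1 - Z i ω) * wstar i) μ :=
    integrable_finsetSum _ fun i _ => hterm i
  have hmean : ∫ ω, ∑ i, (1 - Z i ω) * wstar i ∂μ = 1 - ∑ i, wstar i * q i := by
    have hsum : 1 - ∑ i, wstar i * q i = ∑ i, (wstar i - wstar i * q i) := by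
      rw [Finset.sum_sub_distrib, hwstar1]
    rw [integral_finsetSum _ fun i _ => hterm i, hsum]
    refine Finset.sum_congr rfl fun i _ => ?_
    rw [integral_mul_const, integral_sub (integrable_const 1) (hZint i),
      integral_eq_of_zero_or_one (hZmeas i) (hZ01 i) (hq i).1 (hZq i)]
    simp only [integral_const, probReal_univ, smul_eq_mul]
    ring
  calc ∫ ω, |(∑ i, Z i ω * wstar i * ⟪g, Φ (x i)⟫) - ∑ i, wN i * ⟪g, Φ (x i)⟫| ∂μ
      ≤ ∫ ω, ((∑ i, (1 - Z i ω) * wstar i) * (Kmax * ‖g‖) + (2 * εnys + εLP) * ‖g‖) ∂μ := by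
        refine integral_mono_of_nonneg (ae_of_all _ fun ω => abs_nonneg _)
          ((hmass.mul_const _).add (integrable_const _)) (ae_of_all _ fun ω => ?_)
        exact (abs_sum_thinned_sub_le (fun i => hZ1 i ω) hwstar hf).trans (add_le_add le_rfl hquad)
    _ = (1 - ∑ i, wstar i * q i) * (Kmax * ‖g‖) + (2 * εnys + εLP) * ‖g‖ := by
        rw [integral_add (hmass.mul_const _) (integrable_const _), integral_mul_const, hmean]
        simp
    _ ≤ εvio * (Kmax * ‖g‖) + (2 * εnys + εLP) * ‖g‖ := by
        rw [hεvio]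
        gcongr
    _ = (εvio * Kmax + 2 * εnys + εLP) * ‖g‖ := by ring
end

section
/- Let H be a real Hilbert space, X a set, Φ : X → H a feature map, and P the orthogonal projection of H onto a finite-dimensional subspace V ⊆ H. Let x_1,…,x_N ∈ X and let w, v ∈ ℝ^N be nonnegative weight vectors each summing to 1. If ‖Σ_{i=1}^N (w_i − v_i) PΦ(x_i)‖ ≤ ε_LP and ‖Φ(x_i) − PΦ(x_i)‖ ≤ ε_nys for every i, then ‖Σ_{i=1}^N (w_i − v_i) Φ(x_i)‖ ≤ 2 ε_nys + ε_LP; equivalently, the quadratic form of the difference vector w − v with respect to the Gram matrix (C(x_i, x_j))_{i,j} = (⟨Φ(x_i), Φ(x_j)⟩)_{i,j} is at most (2 ε_nys + ε_LP)². -/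
open scoped RealInnerProductSpace

/-- The difference of two convex combinations of vectors of norm at most `ε` has norm at most
`2 * ε`. -/
theorem norm_sum_sub_smul_le_two_mul {ι E : Type*} [Fintype ι] [SeminormedAddCommGroup E]
    [NormedSpace ℝ E] {w v : ι → ℝ} {r : ι → E} {ε : ℝ}
    (hw : ∀ i, 0 ≤ w i) (hw1 : ∑ i, w i = 1) (hv : ∀ i, 0 ≤ v i) (hv1 : ∑ i, v i = 1)
    (hr : ∀ i, ‖r i‖ ≤ ε) : ‖∑ i, (w i - v i) • r i‖ ≤ 2 * ε := by
  calc ‖∑ i, (w i - v i) • r i‖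
      ≤ ∑ i, (w i + v i) * ε := by
        refine norm_sum_le_of_le _ fun i _ => ?_
        rw [norm_smul, Real.norm_eq_abs]
        have habs : |w i - v i| ≤ w i + v i :=
          abs_le.2 ⟨by linarith [hw i], by linarith [hv i]⟩
        exact mul_le_mul habs (hr i) (norm_nonneg _) (add_nonneg (hw i) (hv i))
    _ = 2 * ε := by
        rw [← Finset.sum_mul, Finset.sum_add_distrib, hw1, hv1]
        norm_num

/-- The quadratic form of a Gram matrix is the squared norm of the linear combination. -/
theorem sum_sum_mul_inner_eq_norm_sq {ι E : Type*} [Fintype ι] [SeminormedAddCommGroup E]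
    [InnerProductSpace ℝ E] (a : ι → ℝ) (f : ι → E) :
    ∑ i, ∑ j, a i * a j * ⟪f i, f j⟫ = ‖∑ i, a i • f i‖ ^ 2 := by
  simp_rw [← real_inner_self_eq_norm_sq, sum_inner, inner_sum, real_inner_smul_left,
    real_inner_smul_right, mul_assoc]

/-- If the projected (Nyström) embedding difference of two probability
weight vectors is at most `εLP` and each Nyström feature residual is at most `εnys`, then
the embedding difference for the exact feature map is at most `2 εnys + εLP`; equivalently
the quadratic form of `w − v` with respect to the Gram matrix is at most
`(2 εnys + εLP)²`. -/
theorem stmt_4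
    {H : Type*} [NormedAddCommGroup H] [InnerProductSpace ℝ H]
    {X : Type*} (Φ : X → H)
    (V : Submodule ℝ H) [FiniteDimensional ℝ V]
    {N : ℕ} (x : Fin N → X) (w v : Fin N → ℝ)
    (hw : ∀ i, 0 ≤ w i) (hw1 : ∑ i, w i = 1)
    (hv : ∀ i, 0 ≤ v i) (hv1 : ∑ i, v i = 1)
    (εLP εnys : ℝ)
    (hLP : ‖∑ i, (w i - v i) • (Submodule.orthogonalProjectionOnto V (Φ (x i)) : H)‖ ≤ εLP)
    (hnys : ∀ i, ‖Φ (x i) - (Submodule.orthogonalProjectionOnto V (Φ (x i)) : H)‖ ≤ εnys) :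
    ‖∑ i, (w i - v i) • Φ (x i)‖ ≤ 2 * εnys + εLP ∧
      ∑ i, ∑ j, (w i - v i) * (w j - v j) * ⟪Φ (x i), Φ (x j)⟫
        ≤ (2 * εnys + εLP) ^ 2 := by
  have hnorm : ‖∑ i, (w i - v i) • Φ (x i)‖ ≤ 2 * εnys + εLP := by
    have hsplit : ∑ i, (w i - v i) • Φ (x i) =
        ∑ i, (w i - v i) • (Φ (x i) - (Submodule.orthogonalProjectionOnto V (Φ (x i)) : H)) +
          ∑ i, (w i - v i) • (Submodule.orthogonalProjectionOnto V (Φ (x i)) : H) := by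
      simp_rw [← Finset.sum_add_distrib, ← smul_add, sub_add_cancel]
    rw [hsplit]
    exact norm_add_le_of_le (norm_sum_sub_smul_le_two_mul hw hw1 hv hv1 hnys) hLP
  refine ⟨hnorm, ?_⟩
  rw [sum_sum_mul_inner_eq_norm_sq (fun i => w i - v i) (fun i => Φ (x i))]
  exact pow_le_pow_left₀ (norm_nonneg _) hnorm 2
end
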